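/- arXiv:1902.07325 — 2 statements merged into one kernel-verified Lean document; each statement's English description precedes it below -/
import Mathlib

section
/- (Zaslavsky's formula for bounded regions) For any hyperplane arrangement 𝒜 in ℝ^n, the number of essentially bounded chambers of 𝒜 equals (−1)^{rk(𝒜)} χ(𝒜, 1) = (−1)^{rk(𝒜)} Σ_Y μ(Y, ⊤), the sum over all flats Y of 𝒜. -/
open Finset MeasureTheory

noncomputable section

namespace CharElts

/-- Ambient Euclidean space `ℝ^n`. -/
abbrev V (n : ℕ) := EuclideanSpace ℝ (Fin n)

/-- An affine functional on `ℝ^n`; a hyperplane is its zero set. -/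
abbrev AffForm (n : ℕ) := V n →ᵃ[ℝ] ℝ

/-- The hyperplane determined by an affine functional. -/
def hypSet {n : ℕ} (ℓ : AffForm n) : Set (V n) := {x | ℓ x = 0}

variable {n : ℕ} (𝒜 : Finset (AffForm n))

/-- Index type for the hyperplanes of the arrangement. -/
abbrev Idx := {ℓ : AffForm n // ℓ ∈ 𝒜}

/-- The (possibly empty) set cut out by a sign vector `σ`. -/
def faceSet (σ : Idx 𝒜 → SignType) : Set (V n) :=
  {x | ∀ ℓ : Idx 𝒜, SignType.sign (ℓ.1 x) = σ ℓ}

/-- A face of the arrangement: a sign vector whose face set is nonempty. -/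
@[ext] structure Face where
  sgn : Idx 𝒜 → SignType
  nonempty : (faceSet 𝒜 sgn).Nonempty

open Classical in
instance : Fintype (Face 𝒜) :=
  Fintype.ofInjective Face.sgn (fun F G h => by cases F; cases G; simpa using h)

/-- The underlying point set of a face. -/
def Face.carrier (F : Face 𝒜) : Set (V n) := faceSet 𝒜 F.sgn

/-- A flat: a nonempty intersection of some subcollection of the hyperplanes
(the empty intersection gives all of `ℝ^n`). -/
def IsFlat (X : Set (V n)) : Prop :=
  X.Nonempty ∧ ∃ P : Idx 𝒜 → Prop, X = ⋂ ℓ ∈ {ℓ : Idx 𝒜 | P ℓ}, hypSet ℓ.1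

/-- The poset of flats, ordered by inclusion. -/
def Flat := {X : Set (V n) // IsFlat 𝒜 X}

instance : PartialOrder (Flat 𝒜) :=
  inferInstanceAs (PartialOrder {X : Set (V n) // IsFlat 𝒜 X})

lemma flat_eq_inter (X : Flat 𝒜) :
    X.1 = ⋂ ℓ ∈ {ℓ : Idx 𝒜 | X.1 ⊆ hypSet ℓ.1}, hypSet ℓ.1 := by
  obtain ⟨Z, hne, P, rfl⟩ := X
  apply subset_antisymm
  · intro x hx
    simp only [Set.mem_iInter, Set.mem_setOf_eq]
    intro ℓ hℓ
    exact hℓ hx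
  · intro x hx
    simp only [Set.mem_iInter, Set.mem_setOf_eq] at hx ⊢
    intro ℓ hℓ
    refine hx ℓ ?_
    intro y hy
    simp only [Set.mem_iInter, Set.mem_setOf_eq] at hy
    exact hy ℓ hℓ

open Classical in
instance : Fintype (Flat 𝒜) :=
  Fintype.ofInjective (fun X : Flat 𝒜 => {ℓ : Idx 𝒜 | X.1 ⊆ hypSet ℓ.1}) <| by
    intro X Y h
    dsimp only at h
    apply Subtype.ext
    rw [flat_eq_inter 𝒜 X, flat_eq_inter 𝒜 Y, h]

/-- The top flat: the whole ambient space. -/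
def topFlat : Flat 𝒜 :=
  ⟨Set.univ, ⟨⟨0, trivial⟩, fun _ => False, by simp⟩⟩

/-- The support of a face: the intersection of the hyperplanes on which it lies. -/
def supp (F : Face 𝒜) : Flat 𝒜 :=
  ⟨⋂ ℓ ∈ {ℓ : Idx 𝒜 | F.sgn ℓ = 0}, hypSet ℓ.1, by
    constructor
    · obtain ⟨x, hx⟩ := F.nonempty
      refine ⟨x, ?_⟩
      simp only [Set.mem_iInter, Set.mem_setOf_eq]
      intro ℓ hℓ
      have h0 := hx ℓ
      rw [hℓ] at h0
      simpa [hypSet, sign_eq_zero_iff] using h0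
    · exact ⟨fun ℓ => F.sgn ℓ = 0, rfl⟩⟩

/-- The dimension of (the affine hull of) a subset of `ℝ^n`. -/
def dimS (X : Set (V n)) : ℕ := Module.finrank ℝ (vectorSpan ℝ X)

open Classical in
/-- An element `w = Σ_F w^F H_F` of the Tits algebra (recorded by its coefficient
vector) is *characteristic of parameter `t`* if for every flat `X`, the sum of the
coefficients of the faces with support contained in `X` equals `t ^ rk X`,
where `rk X = dim X - d` and `d` is the common dimension of the minimal flats. -/
def IsCharacteristic (d : ℕ) (w : Face 𝒜 → ℝ) (t : ℝ) : Prop :=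
  ∀ X : Flat 𝒜,
    (∑ F : Face 𝒜, if (supp 𝒜 F).1 ⊆ X.1 then w F else 0) = t ^ (dimS X.1 - d)

/-- The sign vector of the Tits product `FG` of two faces. -/
def combineSgn {I : Type*} (σ τ : I → SignType) : I → SignType :=
  fun ℓ => if σ ℓ = 0 then τ ℓ else σ ℓ

open Classical in
/-- The product of the Tits algebra, on coefficient vectors:
`(u·v)^C = Σ_{F,G : FG = C} u^F v^G`, extending `H_F · H_G = H_{FG}` bilinearly. -/
def mulT (u v : Face 𝒜 → ℝ) : Face 𝒜 → ℝ :=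
  fun C => ∑ F : Face 𝒜, ∑ G : Face 𝒜,
    if combineSgn F.sgn G.sgn = C.sgn then u F * v G else 0

open Classical in
/-- The basis element `H_F` of the Tits algebra, as a coefficient vector. -/
def unitV (F : Face 𝒜) : Face 𝒜 → ℝ := fun G => if G = F then 1 else 0

/-- A chamber: a face whose sign vector is nowhere zero. -/
def IsChamber (F : Face 𝒜) : Prop := ∀ ℓ : Idx 𝒜, F.sgn ℓ ≠ 0

open Classical in
/-- `IsMoebius 𝒜 μ` states that `μ` is the Möbius function of the poset of
flats of `𝒜` (these conditions determine `μ` uniquely). -/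
def IsMoebius (μ : Flat 𝒜 → Flat 𝒜 → ℝ) : Prop :=
  (∀ X, μ X X = 1) ∧
  (∀ X Y : Flat 𝒜, X < Y →
    (∑ Z : Flat 𝒜, if X ≤ Z ∧ Z ≤ Y then μ X Z else 0) = 0) ∧
  (∀ X Y : Flat 𝒜, ¬ X ≤ Y → μ X Y = 0)

open Classical in
/-- `χ(𝒜^X, t) = Σ_{Y ≤ X} μ(Y, X) t^{rk Y}`: the characteristic polynomial of the
arrangement under the flat `X`.  Taking `X = ⊤` gives the characteristic
polynomial of `𝒜` itself. -/
def charPolyUnder (μ : Flat 𝒜 → Flat 𝒜 → ℝ) (d : ℕ) (X : Flat 𝒜) (t : ℝ) : ℝ :=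
  ∑ Y : Flat 𝒜, if Y ≤ X then μ Y X * t ^ (dimS Y.1 - d) else 0

/-- The space of directions `L = ⋂_{H ∈ 𝒜} dir(H)`: the intersection of the kernels of
the linear parts of the defining functionals. -/
def dirL : Submodule ℝ (V n) := ⨅ ℓ : Idx 𝒜, LinearMap.ker ℓ.1.linear

/-- A face is essentially bounded if its image in `ℝ^n / L` is bounded. -/
def EssBounded (F : Face 𝒜) : Prop :=
  Bornology.IsBounded ((dirL 𝒜).mkQ '' F.carrier)

/-- A hyperplane (zero set of a nonconstant affine functional) is nonempty. -/
lemma hyp_nonempty (ℓ : AffForm n) (h : ℓ.linear ≠ 0) : (hypSet ℓ).Nonempty := by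
  obtain ⟨v, hv⟩ : ∃ v, ℓ.linear v ≠ 0 := by
    by_contra hc
    push_neg at hc
    exact h (LinearMap.ext fun v => hc v)
  refine ⟨((-ℓ 0) / (ℓ.linear v)) • v, ?_⟩
  have hdecomp : ℓ (((-ℓ 0) / (ℓ.linear v)) • v)
      = ℓ.linear (((-ℓ 0) / (ℓ.linear v)) • v) + ℓ 0 := by
    conv_lhs => rw [show ((-ℓ 0) / (ℓ.linear v)) • v = ((-ℓ 0) / (ℓ.linear v)) • v +ᵥ (0 : V n)
      from (add_zero _).symm]
    rw [AffineMap.map_vadd]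
    rfl
  show ℓ _ = 0
  rw [hdecomp, LinearMap.map_smul, smul_eq_mul, div_mul_cancel₀ _ hv, neg_add_cancel]

section Aux
variable {E : Type*} [AddCommGroup E] [Module ℝ E]

/-- weak sign compatibility -/
def WS (s : SignType) (r : ℝ) : Prop :=
  (s = 0 → r = 0) ∧ (s = 1 → 0 ≤ r) ∧ (s = -1 → r ≤ 0)

/-- closed ray stays of the given sign -/
lemma sign_ray {c r : ℝ} (h : WS (SignType.sign c) r) {t : ℝ} (ht : 0 ≤ t) :
    SignType.sign (c + t * r) = SignType.sign c := by
  obtain ⟨h0, h1, h2⟩ := h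
  rcases lt_trichotomy c 0 with hc | hc | hc
  · have := h2 (sign_neg hc)
    rw [sign_neg hc, sign_neg]; nlinarith
  · have := h0 (by simp [hc])
    simp [this]
  · have := h1 (sign_pos hc)
    rw [sign_pos hc, sign_pos]; nlinarith

lemma ws_of_ray {c r : ℝ} (h : ∀ t : ℝ, 0 ≤ t → SignType.sign (c + t * r) = SignType.sign c) :
    WS (SignType.sign c) r := by
  refine ⟨fun hc => ?_, fun hc => ?_, fun hc => ?_⟩
  · have := h 1 zero_le_one
    rw [hc, sign_eq_zero_iff] at this
    rw [sign_eq_zero_iff] at hc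
    linarith
  · rw [sign_eq_one_iff] at hc
    by_contra hr
    push Not at hr
    have := h (c / (-r)) (by apply div_nonneg <;> linarith)
    rw [sign_pos hc, sign_eq_one_iff] at this
    have : c / (-r) * r = -c := by
      have := hr.ne
      field_simp
    linarith
  · rw [sign_eq_neg_one_iff] at hc
    by_contra hr
    push Not at hr
    have := h (-c / r) (by apply div_nonneg <;> linarith)
    rw [sign_neg hc, sign_eq_neg_one_iff] at this
    have : -c / r * r = -c := by field_simp
    linarith

lemma ws_zero (s : SignType) : WS s 0 := ⟨fun _ => rfl, fun _ => le_rfl, fun _ => le_rfl⟩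

lemma ws_add {s : SignType} {a b : ℝ} (ha : WS s a) (hb : WS s b) : WS s (a + b) :=
  ⟨fun h => by rw [ha.1 h, hb.1 h, add_zero], fun h => add_nonneg (ha.2.1 h) (hb.2.1 h),
    fun h => add_nonpos (ha.2.2 h) (hb.2.2 h)⟩

lemma ws_smul {s : SignType} {a c : ℝ} (hc : 0 ≤ c) (ha : WS s a) : WS s (c * a) :=
  ⟨fun h => by rw [ha.1 h, mul_zero], fun h => mul_nonneg hc (ha.2.1 h),
    fun h => mul_nonpos_of_nonneg_of_nonpos hc (ha.2.2 h)⟩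

lemma ws_anti {s : SignType} {a b : ℝ} (ha : WS s a) (hb : WS s b) (h : a + b = 0) : a = 0 := by
  rcases s with _ | _ | _
  · exact ha.1 rfl
  · have := ha.2.2 rfl; have := hb.2.2 rfl; linarith
  · have := ha.2.1 rfl; have := hb.2.1 rfl; linarith

variable {ι : Type*}

def InF (x0 : E) (D : Submodule ℝ E) (a : ι → E →ᵃ[ℝ] ℝ) (σ : ι → SignType) (x : E) : Prop :=
  x - x0 ∈ D ∧ ∀ i, SignType.sign (a i x) = σ i

def LL (D : Submodule ℝ E) (a : ι → E →ᵃ[ℝ] ℝ) : Submodule ℝ E :=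
  D ⊓ ⨅ i, LinearMap.ker (a i).linear

def KK (D : Submodule ℝ E) (a : ι → E →ᵃ[ℝ] ℝ) (σ : ι → SignType) : Submodule ℝ E :=
  D ⊓ ⨅ i, ⨅ (_ : σ i = 0), LinearMap.ker (a i).linear

def RR (D : Submodule ℝ E) (a : ι → E →ᵃ[ℝ] ℝ) (σ : ι → SignType) (v : E) : Prop :=
  v ∈ D ∧ ∀ i, WS (σ i) ((a i).linear v)

def Bd (D : Submodule ℝ E) (a : ι → E →ᵃ[ℝ] ℝ) (σ : ι → SignType) : Prop :=
  ∀ v, RR D a σ v → v ∈ LL D a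

open Classical in
def term (x0 : E) (D : Submodule ℝ E) (a : ι → E →ᵃ[ℝ] ℝ) (σ : ι → SignType) : ℝ :=
  if (∃ x, InF x0 D a σ x) ∧ Bd D a σ then (-1) ^ Module.finrank ℝ (KK D a σ) else 0

variable {x0 : E} {D : Submodule ℝ E} {a : ι → E →ᵃ[ℝ] ℝ} {σ : ι → SignType}

lemma mem_LL {v : E} : v ∈ LL D a ↔ v ∈ D ∧ ∀ i, (a i).linear v = 0 := by
  simp [LL]

lemma mem_KK {v : E} : v ∈ KK D a σ ↔ v ∈ D ∧ ∀ i, σ i = 0 → (a i).linear v = 0 := by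
  simp [KK]

lemma RR.mem_KK {v : E} (h : RR D a σ v) : v ∈ KK D a σ :=
  CharElts.mem_KK.2 ⟨h.1, fun i hi => (h.2 i).1 hi⟩

lemma RR_of_LL {v : E} (h : v ∈ LL D a) : RR D a σ v := by
  rw [mem_LL] at h
  exact ⟨h.1, fun i => by rw [h.2]; exact ws_zero _⟩

lemma RR.add {v w : E} (h : RR D a σ v) (h' : RR D a σ w) : RR D a σ (v + w) :=
  ⟨D.add_mem h.1 h'.1, fun i => by rw [map_add]; exact ws_add (h.2 i) (h'.2 i)⟩

lemma RR.smul {v : E} {c : ℝ} (hc : 0 ≤ c) (h : RR D a σ v) : RR D a σ (c • v) :=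
  ⟨D.smul_mem _ h.1, fun i => by rw [map_smul]; exact ws_smul hc (h.2 i)⟩

lemma RR.anti {v w : E} (h : RR D a σ v) (h' : RR D a σ w) (hvw : v + w ∈ LL D a) :
    v ∈ LL D a := by
  rw [mem_LL] at hvw ⊢
  refine ⟨h.1, fun i => ws_anti (h.2 i) (h'.2 i) ?_⟩
  rw [← map_add]; exact hvw.2 i

lemma aff_add (h : E →ᵃ[ℝ] ℝ) (x v : E) : h (x + v) = h x + h.linear v := by
  have := h.map_vadd x v
  simp only [vadd_eq_add] at this
  rw [add_comm x v, this, add_comm]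

lemma aff_add_smul (h : E →ᵃ[ℝ] ℝ) (x v : E) (t : ℝ) :
    h (x + t • v) = h x + t * h.linear v := by
  rw [aff_add, map_smul, smul_eq_mul]

lemma InF.ray {x v : E} (hx : InF x0 D a σ x) (hv : RR D a σ v) {t : ℝ} (ht : 0 ≤ t) :
    InF x0 D a σ (x + t • v) := by
  refine ⟨?_, fun i => ?_⟩
  · rw [add_sub_right_comm]; exact D.add_mem hx.1 (D.smul_mem _ hv.1)
  · rw [aff_add_smul, sign_ray (by rw [hx.2 i]; exact hv.2 i) ht, hx.2 i]

lemma sign_nhds {c r : ℝ} (h : SignType.sign c = 0 → r = 0) :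
    ∀ᶠ t in nhds (0:ℝ), SignType.sign (c + t * r) = SignType.sign c := by
  have hcont : Filter.Tendsto (fun t : ℝ => c + t * r) (nhds 0) (nhds c) := by
    have : Continuous (fun t : ℝ => c + t * r) := by fun_prop
    simpa using this.tendsto 0
  rcases lt_trichotomy c 0 with hc | hc | hc
  · filter_upwards [hcont.eventually (gt_mem_nhds hc)] with t ht
    rw [sign_neg hc, sign_neg ht]
  · have := h (by simp [hc])
    simp [this]
  · filter_upwards [hcont.eventually (lt_mem_nhds hc)] with t ht
    rw [sign_pos hc, sign_pos ht]

lemma InF.open_dir [Finite ι] {x v : E} (hx : InF x0 D a σ x) (hv : v ∈ KK D a σ) :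
    ∃ t : ℝ, 0 < t ∧ InF x0 D a σ (x + t • v) ∧ InF x0 D a σ (x + (-t) • v) := by
  have hev : ∀ᶠ t in nhds (0:ℝ), InF x0 D a σ (x + t • v) := by
    rw [mem_KK] at hv
    have : ∀ᶠ t in nhds (0:ℝ), ∀ i, SignType.sign (a i x + t * (a i).linear v) = 
        SignType.sign (a i x) := by
      rw [Filter.eventually_all]
      intro i
      exact sign_nhds (fun h => hv.2 i (by rw [← hx.2 i]; exact h))
    filter_upwards [this] with t ht
    refine ⟨?_, fun i => ?_⟩
    · rw [add_sub_right_comm]; exact D.add_mem hx.1 (D.smul_mem _ hv.1)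
    · rw [aff_add_smul, ht i, hx.2 i]
  obtain ⟨ε, hε, H⟩ := Metric.eventually_nhds_iff.1 hev
  refine ⟨ε / 2, by positivity, H ?_, H ?_⟩
  · simp [abs_of_pos hε]; exact hε
  · simp [abs_of_pos hε]; exact hε

lemma InF.sub_mem {x y : E} (hx : InF x0 D a σ x) (hy : InF x0 D a σ y) : y - x ∈ KK D a σ := by
  rw [mem_KK]
  refine ⟨by simpa using D.sub_mem hy.1 hx.1, fun i hi => ?_⟩
  have h1 := hx.2 i
  have h2 := hy.2 i
  rw [hi, sign_eq_zero_iff] at h1 h2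
  have := aff_add (a i) x (y - x)
  rw [add_sub_cancel, h1, h2] at this
  linarith

lemma InF.combo {x y : E} (hx : InF x0 D a σ x) (hy : InF x0 D a σ y) {p q : ℝ} (hp : 0 < p)
    (hq : 0 < q) (hpq : p + q = 1) : InF x0 D a σ (x + q • (y - x)) := by
  refine ⟨?_, fun i => ?_⟩
  · rw [add_sub_right_comm]; exact D.add_mem hx.1 (D.smul_mem _ (hx.sub_mem hy |> fun h => (mem_KK.1 h).1))
  · rw [aff_add_smul]
    have e := aff_add (a i) x (y - x)
    rw [add_sub_cancel] at e
    have e2 : a i x + q * (a i).linear (y - x) = p * a i x + q * a i y := by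
      rw [e]; have : p = 1 - q := by linarith
      rw [this]; ring
    rw [e2]
    have h1 := hx.2 i
    have h2 := hy.2 i
    rw [← h1] at h2 ⊢
    rcases lt_trichotomy (a i x) 0 with hc | hc | hc
    · rw [sign_neg hc, sign_eq_neg_one_iff] at h2
      rw [sign_neg hc, sign_neg]; nlinarith
    · rw [hc, sign_zero, sign_eq_zero_iff] at h2
      rw [hc, h2]; simp
    · rw [sign_pos hc, sign_eq_one_iff] at h2
      rw [sign_pos hc, sign_pos]; nlinarith

lemma finrank_inf_ker [FiniteDimensional ℝ E] (K : Submodule ℝ E) (f : E →ₗ[ℝ] ℝ) {w : E}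
    (hw : w ∈ K) (hfw : f w ≠ 0) :
    Module.finrank ℝ K = Module.finrank ℝ (K ⊓ LinearMap.ker f : Submodule ℝ E) + 1 := by
  let g : K →ₗ[ℝ] ℝ := f.comp K.subtype
  have h1 := g.finrank_range_add_finrank_ker
  have h2 : LinearMap.range g = ⊤ := by
    apply LinearMap.range_eq_top.2
    apply LinearMap.surjective_of_ne_zero
    intro h
    apply hfw
    exact LinearMap.congr_fun h ⟨w, hw⟩
  have h3 : Module.finrank ℝ (LinearMap.ker g) =
      Module.finrank ℝ (K ⊓ LinearMap.ker f : Submodule ℝ E) := by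
    have : (LinearMap.ker g).map K.subtype = K ⊓ LinearMap.ker f := by
      rw [LinearMap.ker_comp, Submodule.map_comap_subtype]
    rw [← this, Submodule.finrank_map_subtype_eq]
  rw [h2, h3, finrank_top, Module.finrank_self] at h1
  omega

section Step
variable {m : ℕ} {b : Fin m → E →ᵃ[ℝ] ℝ} {τ : Fin m → SignType} {h : E →ᵃ[ℝ] ℝ} {s : SignType}


lemma InF_cons {x : E} :
    InF x0 D (Fin.cons h b : Fin (m+1) → E →ᵃ[ℝ] ℝ) (Fin.cons s τ : Fin (m+1) → SignType) x ↔
      InF x0 D b τ x ∧ SignType.sign (h x) = s := by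
  simp only [InF, Fin.forall_fin_succ, Fin.cons_zero, Fin.cons_succ]
  tauto

lemma mem_LL_cons {v : E} :
    v ∈ LL D (Fin.cons h b : Fin (m+1) → E →ᵃ[ℝ] ℝ) ↔ v ∈ LL D b ∧ h.linear v = 0 := by
  simp only [mem_LL, Fin.forall_fin_succ, Fin.cons_zero, Fin.cons_succ]
  tauto

lemma RR_cons {v : E} :
    RR D (Fin.cons h b : Fin (m+1) → E →ᵃ[ℝ] ℝ) (Fin.cons s τ : Fin (m+1) → SignType) v ↔
      RR D b τ v ∧ WS s (h.linear v) := by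
  simp only [RR, Fin.forall_fin_succ, Fin.cons_zero, Fin.cons_succ]
  tauto

lemma Bd_cons :
    Bd D (Fin.cons h b : Fin (m+1) → E →ᵃ[ℝ] ℝ) (Fin.cons s τ : Fin (m+1) → SignType) ↔
      ∀ v, RR D b τ v → WS s (h.linear v) → v ∈ LL D b ∧ h.linear v = 0 := by
  simp only [Bd, RR_cons, mem_LL_cons, and_imp]

lemma KK_cons_zero :
    KK D (Fin.cons h b : Fin (m+1) → E →ᵃ[ℝ] ℝ) (Fin.cons 0 τ : Fin (m+1) → SignType) =
      KK D b τ ⊓ LinearMap.ker h.linear := by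
  ext v
  simp only [mem_KK, Fin.forall_fin_succ, Fin.cons_zero, Fin.cons_succ, Submodule.mem_inf,
    LinearMap.mem_ker]
  tauto

lemma KK_cons_ne (hs : s ≠ 0) :
    KK D (Fin.cons h b : Fin (m+1) → E →ᵃ[ℝ] ℝ) (Fin.cons s τ : Fin (m+1) → SignType) =
      KK D b τ := by
  ext v
  simp only [mem_KK, Fin.forall_fin_succ, Fin.cons_zero, Fin.cons_succ]
  tauto

lemma LL_cons :
    LL D (Fin.cons h b : Fin (m+1) → E →ᵃ[ℝ] ℝ) = LL D b ⊓ LinearMap.ker h.linear := by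
  ext v
  simp only [mem_LL_cons, Submodule.mem_inf, LinearMap.mem_ker]

lemma sum_sign (f : SignType → ℝ) : ∑ s, f s = f 0 + f (-1) + f 1 := by
  have : (Finset.univ : Finset SignType) = {0, -1, 1} := rfl
  rw [this]
  simp [add_assoc]

/-- If the sign of `h` is constant on the face. -/
lemma step_const {s0 : SignType} (hne : ∃ x, InF x0 D b τ x)
    (hc : ∀ x, InF x0 D b τ x → SignType.sign (h x) = s0)
    (hK : s0 = 0 → ∀ v ∈ KK D b τ, h.linear v = 0) :
    (∀ v ∈ LL D b, h.linear v = 0) ∧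
    ∑ s, term x0 D (Fin.cons h b : Fin (m+1) → E →ᵃ[ℝ] ℝ) (Fin.cons s τ : Fin (m+1) → SignType)
      = term x0 D b τ := by
  obtain ⟨x, hx⟩ := hne
  have hR : ∀ v, RR D b τ v → WS s0 (h.linear v) := by
    intro v hv
    rw [← hc x hx]
    apply ws_of_ray
    intro t ht
    rw [← aff_add_smul, hc x hx, hc _ (hx.ray hv ht)]
  have hL : ∀ v ∈ LL D b, h.linear v = 0 := by
    intro v hv
    apply ws_anti (hR v (RR_of_LL hv)) (hR (-v) (RR_of_LL (neg_mem hv)))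
    simp
  refine ⟨hL, ?_⟩
  rw [Finset.sum_eq_single s0]
  · have hKK : KK D (Fin.cons h b : Fin (m+1) → E →ᵃ[ℝ] ℝ) (Fin.cons s0 τ : Fin (m+1) → SignType) =
      KK D b τ := by
      by_cases hs : s0 = 0
      · subst hs
        rw [KK_cons_zero, inf_eq_left]
        exact hK rfl
      · exact KK_cons_ne hs
    have hB : Bd D (Fin.cons h b : Fin (m+1) → E →ᵃ[ℝ] ℝ) (Fin.cons s0 τ : Fin (m+1) → SignType) ↔
        Bd D b τ := by
      rw [Bd_cons]
      constructor
      · intro H v hv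
        exact (H v hv (hR v hv)).1
      · intro H v hv _
        exact ⟨H v hv, hL v (H v hv)⟩
    have hF : (∃ x, InF x0 D (Fin.cons h b : Fin (m+1) → E →ᵃ[ℝ] ℝ)
        (Fin.cons s0 τ : Fin (m+1) → SignType) x) ↔ ∃ x, InF x0 D b τ x := by
      simp only [InF_cons]
      constructor
      · rintro ⟨y, hy, -⟩; exact ⟨y, hy⟩
      · rintro ⟨y, hy⟩; exact ⟨y, hy, hc y hy⟩
    unfold term
    rw [hKK, hB, hF]
  · intro s _ hs
    unfold term
    rw [if_neg]
    rintro ⟨⟨y, hy⟩, -⟩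
    rw [InF_cons] at hy
    exact hs (hy.2 ▸ hc y hy.1)
  · simp

open Classical in
lemma step [FiniteDimensional ℝ E] :
    ∑ s, term x0 D (Fin.cons h b : Fin (m+1) → E →ᵃ[ℝ] ℝ) (Fin.cons s τ : Fin (m+1) → SignType)
      = if (∀ v ∈ LL D b, h.linear v = 0) then term x0 D b τ else - term x0 D b τ := by
  by_cases hne : ∃ x, InF x0 D b τ x
  swap
  · have h0 : term x0 D b τ = 0 := if_neg (fun H => hne H.1)
    rw [h0, neg_zero, ite_self]
    apply Finset.sum_eq_zero
    intro s _
    apply if_neg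
    rintro ⟨⟨y, hy⟩, -⟩
    rw [InF_cons] at hy
    exact hne ⟨y, hy.1⟩
  by_cases hv : ∀ v ∈ KK D b τ, h.linear v = 0
  · obtain ⟨x, hx⟩ := hne
    have := step_const (x0 := x0) (h := h) (s0 := SignType.sign (h x)) ⟨x, hx⟩ (fun y hy => by
      have e := aff_add h x (y - x)
      rw [hv _ (hx.sub_mem hy), add_sub_cancel, add_zero] at e
      rw [e]) (fun _ => hv)
    rw [this.2, if_pos this.1]
  push Not at hv
  obtain ⟨w, hwK, hw⟩ := hv
  by_cases hz : ∃ x, InF x0 D b τ x ∧ h x = 0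
  swap
  · obtain ⟨x, hx⟩ := hne
    have hxne : h x ≠ 0 := fun h0 => hz ⟨x, hx, h0⟩
    have key : ∀ y, InF x0 D b τ y → ∀ z, InF x0 D b τ z → h y < 0 → 0 < h z → False := by
      intro y hy z hz' h1 h2
      apply hz
      have hd : 0 < h z - h y := by linarith
      refine ⟨_, hy.combo hz' (p := h z / (h z - h y)) (q := (- h y) / (h z - h y))
        (by positivity) (div_pos (by linarith) hd) (by field_simp; ring), ?_⟩
      have e := aff_add h y (z - y)
      rw [add_sub_cancel] at e
      rw [aff_add_smul, show h.linear (z - y) = h z - h y by linarith]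
      field_simp
      ring
    have := step_const (x0 := x0) (h := h) (s0 := SignType.sign (h x)) ⟨x, hx⟩ (fun y hy => by
      have hyne : h y ≠ 0 := fun h0 => hz ⟨y, hy, h0⟩
      rcases lt_or_gt_of_ne hxne with h1 | h1 <;> rcases lt_or_gt_of_ne hyne with h2 | h2
      · rw [sign_neg h1, sign_neg h2]
      · exact (key x hx y hy h1 h2).elim
      · exact (key y hy x hx h2 h1).elim
      · rw [sign_pos h1, sign_pos h2]) (fun h0 => (hxne (sign_eq_zero_iff.1 h0)).elim)
    rw [this.2, if_pos this.1]
  obtain ⟨x, hx, hx0⟩ := hz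
  -- all three signs occur
  obtain ⟨t, ht, ht1, ht2⟩ := hx.open_dir hwK
  have e1 := aff_add_smul h x w t
  have e2 := aff_add_smul h x w (-t)
  rw [hx0, zero_add] at e1 e2
  have hall : ∀ s : SignType, ∃ y, InF x0 D b τ y ∧ SignType.sign (h y) = s := by
    intro s
    rcases s with _ | _ | _
    · exact ⟨x, hx, by rw [hx0]; simp⟩
    · rcases lt_or_gt_of_ne hw with h1 | h1
      · exact ⟨_, ht1, sign_neg (by rw [e1]; nlinarith)⟩
      · exact ⟨_, ht2, sign_neg (by rw [e2]; nlinarith)⟩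
    · rcases lt_or_gt_of_ne hw with h1 | h1
      · exact ⟨_, ht2, sign_pos (by rw [e2]; nlinarith)⟩
      · exact ⟨_, ht1, sign_pos (by rw [e1]; nlinarith)⟩
  have hdim := finrank_inf_ker _ _ hwK hw
  have w0 : ∀ r : ℝ, WS 0 r ↔ r = 0 := fun r => by simp [WS]
  have w1 : ∀ r : ℝ, WS 1 r ↔ 0 ≤ r := fun r => by simp [WS]
  have w2 : ∀ r : ℝ, WS (-1) r ↔ r ≤ 0 := fun r => by simp [WS]
  rw [sum_sign]
  unfold term
  rw [KK_cons_zero, KK_cons_ne (show (1:SignType) ≠ 0 by decide),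
    KK_cons_ne (show (-1:SignType) ≠ 0 by decide)]
  simp only [InF_cons, hall, hne, true_and, Bd_cons, hdim, w0, w1, w2]
  set k := Module.finrank ℝ (KK D b τ ⊓ LinearMap.ker h.linear : Submodule ℝ E)
  by_cases hA : ∀ v ∈ LL D b, h.linear v = 0
  · rw [if_pos hA]
    by_cases hB : Bd D b τ
    · rw [if_pos (fun v hv _ => ⟨hB v hv, hA v (hB v hv)⟩),
        if_pos (fun v hv _ => ⟨hB v hv, hA v (hB v hv)⟩),
        if_pos (fun v hv _ => ⟨hB v hv, hA v (hB v hv)⟩), if_pos hB]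
      ring
    · rw [if_neg hB]
      by_cases hB0 : ∀ v, RR D b τ v → h.linear v = 0 → v ∈ LL D b ∧ h.linear v = 0
      · rw [if_pos hB0]
        have key : ∀ u v, RR D b τ u → RR D b τ v → 0 < h.linear u → h.linear v < 0 → False := by
          intro u v hu hv h1 h2
          have hs := hB0 _ ((hu.smul (c := - h.linear v) (by linarith)).add
            (hv.smul (c := h.linear u) h1.le)) (by simp; ring)
          have := hA _ (RR.anti (hu.smul (c := - h.linear v) (by linarith))
            (hv.smul (c := h.linear u) h1.le) hs.1)
          rw [map_smul, smul_eq_mul] at this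
          nlinarith
        unfold Bd at hB
        push Not at hB
        obtain ⟨u, hu, huL⟩ := hB
        have hu0 : h.linear u ≠ 0 := fun h0 => huL (hB0 u hu h0).1
        rcases lt_or_gt_of_ne hu0 with h1 | h1
        · rw [if_neg (fun H => huL (H u hu h1.le).1), if_pos]
          · ring
          · intro v hv hv0
            rcases hv0.eq_or_lt with h2 | h2
            · exact hB0 v hv h2.symm
            · exact (key v u hv hu h2 h1).elim
        · rw [if_neg (fun H => huL (H u hu h1.le).1 : ¬ (∀ v, RR D b τ v → 0 ≤ h.linear v → v ∈ LL D b ∧ h.linear v = 0)), if_pos]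
          · ring
          · intro v hv hv0
            rcases hv0.eq_or_lt with h2 | h2
            · exact hB0 v hv h2
            · exact (key u v hu hv h1 h2).elim
      · rw [if_neg hB0, if_neg (fun H => hB0 (fun v hv h0 => H v hv h0.le)),
          if_neg (fun H => hB0 (fun v hv h0 => H v hv h0.ge))]
        ring
  · rw [if_neg hA]
    push Not at hA
    obtain ⟨u, hu, hu0⟩ := hA
    have hB0 : (∀ v, RR D b τ v → h.linear v = 0 → v ∈ LL D b ∧ h.linear v = 0) ↔ Bd D b τ := by
      constructor
      · intro H v hv
        have hc : (- (h.linear v / h.linear u)) • u ∈ LL D b := Submodule.smul_mem _ _ hu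
        have := (H _ (hv.add (RR_of_LL hc)) (by simp [hu0])).1
        exact (Submodule.add_mem_iff_left _ hc).1 this
      · intro H v hv h0
        exact ⟨H v hv, h0⟩
    have hu' : ∀ c : ℝ, RR D b τ (c • u) := fun c => RR_of_LL (Submodule.smul_mem _ _ hu)
    have n1 : ¬ (∀ v, RR D b τ v → h.linear v ≤ 0 → v ∈ LL D b ∧ h.linear v = 0) := by
      intro H
      have := (H _ (hu' (- h.linear u)) (by simp; nlinarith)).2
      simp at this
      exact hu0 this
    have n2 : ¬ (∀ v, RR D b τ v → 0 ≤ h.linear v → v ∈ LL D b ∧ h.linear v = 0) := by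
      intro H
      have := (H _ (hu' (h.linear u)) (by simp; nlinarith)).2
      simp at this
      exact hu0 this
    rw [if_neg n1, if_neg n2]
    simp only [hB0]
    split_ifs <;> ring

theorem euler [FiniteDimensional ℝ E] (x0 : E) (D : Submodule ℝ E) :
    ∀ (m : ℕ) (b : Fin m → E →ᵃ[ℝ] ℝ),
      ∑ τ, term x0 D b τ = (-1) ^ Module.finrank ℝ (LL D b) := by
  intro m
  induction m with
  | zero =>
    intro b
    rw [Fintype.sum_unique]
    unfold term
    rw [if_pos]
    · have : ∀ τ, KK D b τ = LL D b := by
        intro τ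
        simp [KK, LL]
      rw [this]
    · refine ⟨⟨x0, by simp, fun i => i.elim0⟩, fun v hv => ?_⟩
      rw [mem_LL]
      exact ⟨hv.1, fun i => i.elim0⟩
  | succ m ih =>
    intro b
    obtain ⟨h, b, rfl⟩ : ∃ h b', b = Fin.cons h b' := ⟨b 0, Fin.tail b, (Fin.cons_self_tail b).symm⟩
    rw [← (Fin.consEquiv (fun _ : Fin (m+1) => SignType)).sum_comp, Fintype.sum_prod_type,
      Finset.sum_comm]
    classical
    trans ∑ τ : Fin m → SignType, ∑ s, term x0 D (Fin.cons h b : Fin (m+1) → E →ᵃ[ℝ] ℝ)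
      (Fin.cons s τ : Fin (m+1) → SignType)
    · rfl
    rw [Finset.sum_congr rfl (fun τ _ => step (x0 := x0) (D := D) (b := b) (τ := τ) (h := h)), LL_cons]
    by_cases hA : ∀ v ∈ LL D b, h.linear v = 0
    · simp only [if_pos hA]
      rw [ih, inf_eq_left.2]
      exact hA
    · simp only [if_neg hA]
      rw [Finset.sum_neg_distrib, ih]
      push Not at hA
      obtain ⟨u, hu, hu0⟩ := hA
      rw [finrank_inf_ker _ _ hu hu0]
      ring

end Step

theorem euler' [FiniteDimensional ℝ E] [Fintype ι] (x0 : E) (D : Submodule ℝ E)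
    (a : ι → E →ᵃ[ℝ] ℝ) [Fintype (ι → SignType)] :
    ∑ σ, term x0 D a σ = (-1) ^ Module.finrank ℝ (LL D a) := by
  let e := Fintype.equivFin ι
  have := euler x0 D _ (a ∘ e.symm)
  have hL : LL D (a ∘ e.symm) = LL D a := by
    ext v
    simp only [mem_LL, Function.comp]
    rw [e.symm.surjective.forall (p := fun i => (a i).linear v = 0)]
  rw [hL] at this
  rw [← this]
  symm
  refine Fintype.sum_equiv (e.symm.arrowCongr (Equiv.refl _)) _ _ fun τ => ?_
  have hK : KK D (a ∘ e.symm) τ = KK D a (τ ∘ e) := by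
    ext v
    simp only [mem_KK, Function.comp]
    rw [e.symm.surjective.forall (p := fun i => τ (e i) = 0 → (a i).linear v = 0)]
    simp
  have hF : ∀ x, InF x0 D (a ∘ e.symm) τ x ↔ InF x0 D a (τ ∘ e) x := by
    intro v
    simp only [InF, Function.comp]
    rw [e.symm.surjective.forall (p := fun i => SignType.sign (a i v) = τ (e i))]
    simp
  have hR : ∀ x, RR D (a ∘ e.symm) τ x ↔ RR D a (τ ∘ e) x := by
    intro v
    simp only [RR, Function.comp]
    rw [e.symm.surjective.forall (p := fun i => WS (τ (e i)) ((a i).linear v))]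
    simp
  have : (e.symm.arrowCongr (Equiv.refl SignType)) τ = τ ∘ e := by
    ext i; simp
  rw [this]
  have hB : Bd D (a ∘ e.symm) τ ↔ Bd D a (τ ∘ e) := by
    unfold Bd
    rw [hL]
    simp only [hR]
  have hF' : (∃ x, InF x0 D (a ∘ e.symm) τ x) ↔ ∃ x, InF x0 D a (τ ∘ e) x := exists_congr hF
  unfold term
  rw [hK, hB, hF']

end Aux

section Main
variable {n : ℕ} (𝒜 : Finset (AffForm n))

/-- the family of functionals -/
def fam : Idx 𝒜 → V n →ᵃ[ℝ] ℝ := fun ℓ => ℓ.1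

lemma LL_fam : LL ⊤ (fam 𝒜) = dirL 𝒜 := by
  simp [LL, dirL, fam]

lemma essBounded_iff (F : Face 𝒜) : EssBounded 𝒜 F ↔ Bd ⊤ (fam 𝒜) F.sgn := by
  have hmem : ∀ x, InF 0 ⊤ (fam 𝒜) F.sgn x ↔ x ∈ F.carrier := by
    intro x
    simp [InF, Face.carrier, faceSet, fam]
  obtain ⟨x, hx⟩ := F.nonempty
  have hx' : InF 0 ⊤ (fam 𝒜) F.sgn x := (hmem x).2 hx
  constructor
  · intro hb v hv
    rw [LL_fam]
    obtain ⟨C, hC⟩ := hb.exists_norm_le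
    have h1 : ∀ t : ℝ, 0 ≤ t → t * ‖(dirL 𝒜).mkQ v‖ ≤ C + ‖(dirL 𝒜).mkQ x‖ := by
      intro t ht
      have h2 := hC _ ⟨_, (hmem _).1 (hx'.ray hv ht), rfl⟩
      rw [map_add, map_smul] at h2
      have h3 := norm_sub_le ((dirL 𝒜).mkQ x + t • (dirL 𝒜).mkQ v) ((dirL 𝒜).mkQ x)
      rw [add_sub_cancel_left, norm_smul, Real.norm_of_nonneg ht] at h3
      linarith
    have h0 : ‖(dirL 𝒜).mkQ v‖ = 0 := by
      by_contra hne
      have hpos : 0 < ‖(dirL 𝒜).mkQ v‖ := lt_of_le_of_ne (norm_nonneg _) (Ne.symm hne)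
      have hC0 : 0 ≤ C + ‖(dirL 𝒜).mkQ x‖ := by simpa using h1 0 le_rfl
      have := h1 ((C + ‖(dirL 𝒜).mkQ x‖ + 1) / ‖(dirL 𝒜).mkQ v‖) (by positivity)
      rw [div_mul_cancel₀ _ hne] at this
      linarith
    have hcl : IsClosed (dirL 𝒜 : Set (V n)) := Submodule.closed_of_finiteDimensional _
    have h4 := (QuotientAddGroup.norm_mk_eq_zero_iff_mem_closure
      (S := (dirL 𝒜).toAddSubgroup) (m := v)).1 h0
    have h5 : v ∈ closure (dirL 𝒜 : Set (V n)) := h4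
    rw [hcl.closure_eq] at h5
    exact h5
  · intro hB
    by_contra hnb
    -- unbounded: get a sequence
    have hseq : ∀ k : ℕ, ∃ y : V n, y ∈ F.carrier ∧ y ∈ (dirL 𝒜)ᗮ ∧ (k : ℝ) < ‖y‖ := by
      intro k
      by_contra hk
      push Not at hk
      apply hnb
      unfold EssBounded
      rw [isBounded_iff_forall_norm_le]
      refine ⟨k, ?_⟩
      rintro _ ⟨z, hz, rfl⟩
      obtain ⟨u, hu, w, hw, rfl⟩ := (dirL 𝒜).exists_add_mem_mem_orthogonal z
      have hwF : w ∈ F.carrier := by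
        have := ((hmem _).2 hz).ray (v := -u) (RR_of_LL (by
          rw [LL_fam]; exact neg_mem hu)) zero_le_one
        rw [one_smul] at this
        rw [← hmem]
        convert this using 1
        abel
      have hq : (dirL 𝒜).mkQ (u + w) = (dirL 𝒜).mkQ w := by
        rw [map_add, (Submodule.Quotient.mk_eq_zero _).2 hu |> fun h => (show (dirL 𝒜).mkQ u = 0 from h), zero_add]
      rw [hq]
      exact (Submodule.Quotient.norm_mk_le (dirL 𝒜) w).trans (hk w hwF hw)
    choose y hyF hyO hyk using hseq
    have hypos : ∀ k, 0 < ‖y k‖ := fun k => lt_of_le_of_lt (Nat.cast_nonneg k) (hyk k)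
    have hsph : ∀ k, (‖y k‖⁻¹ • y k) ∈ Metric.sphere (0 : V n) 1 := by
      intro k
      simp [norm_smul, (hypos k).ne']
    obtain ⟨u, hu, φ, hφ, hlim⟩ := (isCompact_sphere (0 : V n) 1).tendsto_subseq hsph
    have hinv : Filter.Tendsto (fun k => ‖y (φ k)‖⁻¹) Filter.atTop (nhds 0) := by
      apply Filter.Tendsto.inv_tendsto_atTop
      have h5 : Filter.Tendsto (fun k => ‖y k‖) Filter.atTop Filter.atTop :=
        Filter.tendsto_atTop_mono (fun k => (hyk k).le) tendsto_natCast_atTop_atTop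
      exact h5.comp hφ.tendsto_atTop
    have hlin : ∀ ℓ : Idx 𝒜, Filter.Tendsto (fun k => ‖y (φ k)‖⁻¹ * ℓ.1 (y (φ k))) Filter.atTop
        (nhds (ℓ.1.linear u)) := by
      intro ℓ
      have hc : Continuous ℓ.1.linear := LinearMap.continuous_of_finiteDimensional _
      have h6 := ((hc.tendsto u).comp hlim).add (hinv.mul_const (ℓ.1 0))
      rw [zero_mul, add_zero] at h6
      refine h6.congr fun k => ?_
      have := aff_add ℓ.1 0 (y (φ k))
      rw [zero_add] at this
      simp only [Function.comp, map_smul, smul_eq_mul, this]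
      ring
    have huR : RR ⊤ (fam 𝒜) F.sgn u := by
      refine ⟨trivial, fun ℓ => ⟨fun hs => ?_, fun hs => ?_, fun hs => ?_⟩⟩
      · refine tendsto_nhds_unique (hlin ℓ) (tendsto_const_nhds.congr fun k => ?_)
        have h7 := hyF (φ k) ℓ
        rw [hs, sign_eq_zero_iff] at h7
        rw [h7, mul_zero]
      · refine ge_of_tendsto' (hlin ℓ) fun k => ?_
        have h7 := hyF (φ k) ℓ
        rw [hs, sign_eq_one_iff] at h7
        exact mul_nonneg (inv_nonneg.2 (norm_nonneg _)) h7.le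
      · refine le_of_tendsto' (hlin ℓ) fun k => ?_
        have h7 := hyF (φ k) ℓ
        rw [hs, sign_eq_neg_one_iff] at h7
        exact mul_nonpos_of_nonneg_of_nonpos (inv_nonneg.2 (norm_nonneg _)) h7.le
    have huL := hB u huR
    rw [LL_fam] at huL
    have huO : u ∈ (dirL 𝒜)ᗮ :=
      (Submodule.isClosed_orthogonal (dirL 𝒜)).mem_of_tendsto hlim
        (Filter.Eventually.of_forall fun k => Submodule.smul_mem _ _ (hyO (φ k)))
    have hu0 : u = 0 := by
      have := Submodule.inner_right_of_mem_orthogonal huL huO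
      exact inner_self_eq_zero.1 this
    simp [hu0] at hu

/-- direction of a flat -/
def dirF (X : Flat 𝒜) : Submodule ℝ (V n) :=
  ⨅ ℓ : Idx 𝒜, ⨅ (_ : X.1 ⊆ hypSet ℓ.1), LinearMap.ker ℓ.1.linear

lemma mem_dirF {X : Flat 𝒜} {v : V n} :
    v ∈ dirF 𝒜 X ↔ ∀ ℓ : Idx 𝒜, X.1 ⊆ hypSet ℓ.1 → ℓ.1.linear v = 0 := by
  simp [dirF]

lemma mem_flat {X : Flat 𝒜} {x : V n} :
    x ∈ X.1 ↔ ∀ ℓ : Idx 𝒜, X.1 ⊆ hypSet ℓ.1 → ℓ.1 x = 0 := by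
  conv_lhs => rw [flat_eq_inter 𝒜 X]
  simp [hypSet]

lemma sub_mem_dirF {X : Flat 𝒜} {x0 : V n} (h0 : x0 ∈ X.1) (x : V n) :
    x - x0 ∈ dirF 𝒜 X ↔ x ∈ X.1 := by
  rw [mem_dirF, mem_flat]
  refine forall_congr' fun ℓ => imp_congr_right fun hℓ => ?_
  have := aff_add ℓ.1 x0 (x - x0)
  rw [add_sub_cancel, (mem_flat 𝒜).1 h0 ℓ hℓ, zero_add] at this
  rw [this]

lemma supp_le_iff (F : Face 𝒜) (X : Flat 𝒜) :
    supp 𝒜 F ≤ X ↔ ∀ ℓ : Idx 𝒜, X.1 ⊆ hypSet ℓ.1 → F.sgn ℓ = 0 := by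
  constructor
  · intro h ℓ hℓ
    obtain ⟨x, hx⟩ := F.nonempty
    have hxs : x ∈ (supp 𝒜 F).1 := by
      simp only [supp, Set.mem_iInter, Set.mem_ofPred_eq]
      intro ℓ' h'
      have := hx ℓ'
      rw [h', sign_eq_zero_iff] at this
      exact this
    have h0 : ℓ.1 x = 0 := hℓ (h hxs)
    rw [← hx ℓ, h0, sign_zero]
  · intro h x hx
    rw [mem_flat]
    intro ℓ hℓ
    simp only [supp, Set.mem_iInter, Set.mem_ofPred_eq] at hx
    exact hx ℓ (h ℓ hℓ)

/-- coefficient of a face -/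
def coef (F : Face 𝒜) : ℝ := term 0 ⊤ (fam 𝒜) F.sgn

open Classical in
lemma flat_sum (X : Flat 𝒜) :
    ∑ F : Face 𝒜, (if supp 𝒜 F ≤ X then coef 𝒜 F else 0) =
      (-1) ^ Module.finrank ℝ (dirL 𝒜) := by
  obtain ⟨x0, hx0⟩ := X.2.1
  have hL : LL (dirF 𝒜 X) (fam 𝒜) = dirL 𝒜 := by
    rw [← LL_fam]
    ext v
    simp only [mem_LL, mem_dirF, Submodule.mem_top, true_and, fam]
    exact ⟨fun h => h.2, fun h => ⟨fun ℓ _ => h ℓ, h⟩⟩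
  rw [← hL, ← euler' x0]
  refine Fintype.sum_of_injective (Face.sgn : Face 𝒜 → _)
    (fun F G h => Face.ext h) _ _ ?_ ?_
  · intro σ hσ
    apply if_neg
    rintro ⟨⟨x, hx⟩, -⟩
    exact hσ ⟨⟨σ, ⟨x, hx.2⟩⟩, rfl⟩
  · intro F
    by_cases hF : supp 𝒜 F ≤ X
    · rw [if_pos hF]
      have hF' := (supp_le_iff 𝒜 F X).1 hF
      have hK : KK (dirF 𝒜 X) (fam 𝒜) F.sgn = KK ⊤ (fam 𝒜) F.sgn := by
        ext v
        simp only [mem_KK, mem_dirF, Submodule.mem_top, true_and, fam]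
        exact ⟨fun h => h.2, fun h => ⟨fun ℓ hℓ => h ℓ (hF' ℓ hℓ), h⟩⟩
      have hR : ∀ v, RR (dirF 𝒜 X) (fam 𝒜) F.sgn v ↔ RR ⊤ (fam 𝒜) F.sgn v := by
        intro v
        simp only [RR, mem_dirF, Submodule.mem_top, true_and, fam]
        exact ⟨fun h => h.2, fun h => ⟨fun ℓ hℓ => (h ℓ).1 (hF' ℓ hℓ), h⟩⟩
      have hB : Bd (dirF 𝒜 X) (fam 𝒜) F.sgn ↔ Bd ⊤ (fam 𝒜) F.sgn := by
        unfold Bd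
        rw [hL, LL_fam]
        simp only [hR]
      have h1 : ∃ x, InF 0 ⊤ (fam 𝒜) F.sgn x := by
        obtain ⟨x, hx⟩ := F.nonempty
        exact ⟨x, trivial, hx⟩
      have h2 : ∃ x, InF x0 (dirF 𝒜 X) (fam 𝒜) F.sgn x := by
        obtain ⟨x, hx⟩ := F.nonempty
        refine ⟨x, ?_, hx⟩
        rw [sub_mem_dirF 𝒜 hx0, mem_flat]
        intro ℓ hℓ
        have := hx ℓ
        rwa [hF' ℓ hℓ, sign_eq_zero_iff] at this
      unfold coef term
      rw [hK, hB]
      simp only [h1, h2]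
    · rw [if_neg hF]
      symm
      apply if_neg
      rintro ⟨⟨x, hx⟩, -⟩
      apply hF
      rw [supp_le_iff]
      intro ℓ hℓ
      have := (sub_mem_dirF 𝒜 hx0 x).1 hx.1
      rw [← hx.2 ℓ]
      show SignType.sign (ℓ.1 x) = 0
      rw [sign_eq_zero_iff]
      exact hℓ this

open Classical in
lemma moebius_dual (μ : Flat 𝒜 → Flat 𝒜 → ℝ) (hμ : IsMoebius 𝒜 μ) (Y Z : Flat 𝒜) :
    ∑ X, (if Y ≤ X then μ X Z else 0) = if Y = Z then 1 else 0 := by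
  let M : Matrix (Flat 𝒜) (Flat 𝒜) ℝ := Matrix.of μ
  let Ze : Matrix (Flat 𝒜) (Flat 𝒜) ℝ := Matrix.of fun X Y => if X ≤ Y then 1 else 0
  have h1 : M * Ze = 1 := by
    ext X Y
    rw [Matrix.mul_apply, Matrix.one_apply]
    have e : ∀ Z, M X Z * Ze Z Y = if X ≤ Z ∧ Z ≤ Y then μ X Z else 0 := by
      intro Z
      simp only [M, Ze, Matrix.of_apply]
      by_cases hXZ : X ≤ Z
      · by_cases hZY : Z ≤ Y <;> simp [hXZ, hZY]
      · simp [hXZ, hμ.2.2 X Z hXZ]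
    simp only [e]
    by_cases hXY : X = Y
    · subst hXY
      rw [if_pos rfl, Finset.sum_eq_single X]
      · simp [hμ.1]
      · intro Z _ hZ
        exact if_neg fun h => hZ (le_antisymm h.2 h.1)
      · simp
    · rw [if_neg hXY]
      by_cases hle : X ≤ Y
      · exact hμ.2.1 X Y (lt_of_le_of_ne hle hXY)
      · exact Finset.sum_eq_zero fun Z _ => if_neg fun h => hle (h.1.trans h.2)
  have h2 : Ze * M = 1 := mul_eq_one_comm.1 h1
  have h3 := congrFun (congrFun h2 Y) Z
  rw [Matrix.mul_apply, Matrix.one_apply] at h3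
  rw [← h3]
  refine Finset.sum_congr rfl fun X _ => ?_
  simp [M, Ze]

lemma supp_eq_top_iff (h𝒜 : ∀ ℓ ∈ 𝒜, ℓ.linear ≠ 0) (F : Face 𝒜) :
    supp 𝒜 F = topFlat 𝒜 ↔ IsChamber 𝒜 F := by
  constructor
  · intro h ℓ hℓ
    apply h𝒜 ℓ.1 ℓ.2
    have h0 : ∀ x, ℓ.1 x = 0 := by
      intro x
      have hx : x ∈ (supp 𝒜 F).1 := by rw [h]; trivial
      simp only [supp, Set.mem_iInter, Set.mem_ofPred_eq] at hx
      exact hx ℓ hℓ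
    ext1 v
    have := aff_add ℓ.1 0 v
    rw [h0, h0, zero_add] at this
    simpa using this.symm
  · intro h
    apply Subtype.ext
    simp [supp, topFlat, h _]

open Classical in
lemma main_count (h𝒜 : ∀ ℓ ∈ 𝒜, ℓ.linear ≠ 0)
    (μ : Flat 𝒜 → Flat 𝒜 → ℝ) (hμ : IsMoebius 𝒜 μ) :
    ((univ.filter (fun C : Face 𝒜 => IsChamber 𝒜 C ∧ EssBounded 𝒜 C)).card : ℝ)
        = (-1 : ℝ) ^ (n - Module.finrank ℝ (dirL 𝒜)) * ∑ Y : Flat 𝒜, μ Y (topFlat 𝒜) := by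
  have h1 : ∑ F : Face 𝒜, (if supp 𝒜 F = topFlat 𝒜 then coef 𝒜 F else 0) =
      (-1) ^ Module.finrank ℝ (dirL 𝒜) * ∑ Y : Flat 𝒜, μ Y (topFlat 𝒜) := by
    rw [Finset.mul_sum]
    have : ∀ Y : Flat 𝒜, (-1) ^ Module.finrank ℝ (dirL 𝒜) * μ Y (topFlat 𝒜) =
        ∑ F : Face 𝒜, coef 𝒜 F * (if supp 𝒜 F ≤ Y then μ Y (topFlat 𝒜) else 0) := by
      intro Y
      rw [← flat_sum 𝒜 Y, Finset.sum_mul]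
      refine Finset.sum_congr rfl fun F _ => ?_
      split_ifs <;> simp
    simp only [this]
    rw [Finset.sum_comm]
    refine Finset.sum_congr rfl fun F _ => ?_
    rw [← Finset.mul_sum, moebius_dual 𝒜 μ hμ]
    split_ifs <;> simp
  have h2 : ∑ F : Face 𝒜, (if supp 𝒜 F = topFlat 𝒜 then coef 𝒜 F else 0) =
      (-1) ^ n * ((univ.filter (fun C : Face 𝒜 => IsChamber 𝒜 C ∧ EssBounded 𝒜 C)).card : ℝ) := by
    rw [Finset.card_filter, Nat.cast_sum, Finset.mul_sum]
    refine Finset.sum_congr rfl fun F _ => ?_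
    rw [supp_eq_top_iff 𝒜 h𝒜]
    by_cases hc : IsChamber 𝒜 F
    · have hK : KK ⊤ (fam 𝒜) F.sgn = ⊤ := by
        ext v
        simp only [mem_KK, Submodule.mem_top, true_and, iff_true]
        intro ℓ hℓ
        exact (hc ℓ hℓ).elim
      have hx : ∃ x, InF 0 ⊤ (fam 𝒜) F.sgn x := by
        obtain ⟨x, hx⟩ := F.nonempty
        exact ⟨x, trivial, hx⟩
      unfold coef term
      rw [if_pos hc, hK, ← essBounded_iff]
      simp [hx, hc]
    · simp [hc]
  have hd : Module.finrank ℝ (dirL 𝒜) ≤ n := by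
    simpa using Submodule.finrank_le (dirL 𝒜)
  obtain ⟨r, hr⟩ := Nat.exists_eq_add_of_le hd
  rw [h1] at h2
  generalize Module.finrank ℝ (dirL 𝒜) = d at *
  generalize ∑ Y : Flat 𝒜, μ Y (topFlat 𝒜) = S at *
  generalize ((univ.filter (fun C : Face 𝒜 => IsChamber 𝒜 C ∧ EssBounded 𝒜 C)).card : ℝ) = N at *
  have hnd : n - d = r := by omega
  rw [hnd]
  have e1 : ((-1:ℝ)) ^ n = (-1) ^ d * (-1) ^ r := by rw [hr, pow_add]
  rw [e1, mul_assoc] at h2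
  have h3 := mul_left_cancel₀ (pow_ne_zero d (by norm_num : (-1:ℝ) ≠ 0)) h2
  rw [h3, ← mul_assoc, ← pow_add, Even.neg_one_pow ⟨r, rfl⟩, one_mul]

end Main

open Classical in
/-- **Zaslavsky's formula for bounded regions.** The number of essentially bounded
chambers of `𝒜` equals `(-1)^{rk 𝒜} χ(𝒜, 1) = (-1)^{rk 𝒜} Σ_Y μ(Y, ⊤)`,
where `rk 𝒜 = n - d` and `d = dim L`. -/
theorem zaslavsky_bounded_chambers {n : ℕ} (𝒜 : Finset (AffForm n))
    (h𝒜 : ∀ ℓ ∈ 𝒜, ℓ.linear ≠ 0)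
    (μ : Flat 𝒜 → Flat 𝒜 → ℝ) (hμ : IsMoebius 𝒜 μ) :
    ((univ.filter (fun C : Face 𝒜 => IsChamber 𝒜 C ∧ EssBounded 𝒜 C)).card : ℝ)
        = (-1 : ℝ) ^ (n - Module.finrank ℝ (dirL 𝒜)) *
            charPolyUnder 𝒜 μ (Module.finrank ℝ (dirL 𝒜)) (topFlat 𝒜) 1 ∧
    ((univ.filter (fun C : Face 𝒜 => IsChamber 𝒜 C ∧ EssBounded 𝒜 C)).card : ℝ)
        = (-1 : ℝ) ^ (n - Module.finrank ℝ (dirL 𝒜)) * ∑ Y : Flat 𝒜, μ Y (topFlat 𝒜) := by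
  have h := main_count 𝒜 h𝒜 μ hμ
  refine ⟨?_, h⟩
  rw [h]
  congr 1
  unfold charPolyUnder
  refine Finset.sum_congr rfl fun Y _ => ?_
  have hY : Y ≤ topFlat 𝒜 := fun x _ => trivial
  rw [if_pos hY, one_pow, mul_one]

end CharElts
end
end

section
/- The characteristic polynomial of the braid arrangement 𝒜_n satisfies χ(𝒜_n, t) = (t−1)(t−2)⋯(t−(n−1)) for all n ≥ 1 and all t ∈ ℝ. -/
open Finset MeasureTheory

noncomputable section

namespace CharElts

variable {n : ℕ} (𝒜 : Finset (AffForm n))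

/-- The affine functional `x ↦ x i - x j` of a diagonal hyperplane `x_i = x_j`. -/
def diffForm (n : ℕ) (i j : Fin n) : AffForm n where
  toFun := fun x => x i - x j
  linear :=
    { toFun := fun x => x i - x j
      map_add' := fun x y => by
        simp only [PiLp.add_apply]
        ring
      map_smul' := fun c x => by
        simp only [PiLp.smul_apply, smul_eq_mul, RingHom.id_apply]
        ring }
  map_vadd' := fun p v => by
    simp only [vadd_eq_add, PiLp.add_apply, LinearMap.coe_mk, AddHom.coe_mk]
    ring

open Classical in
/-- The braid arrangement in `ℝ^n`: the hyperplanes `x_i = x_j` for `1 ≤ i < j ≤ n`. -/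
def braid (n : ℕ) : Finset (AffForm n) :=
  ((univ : Finset (Fin n × Fin n)).filter fun p => p.1 < p.2).image
    fun p => diffForm n p.1 p.2

/-- The relation of coordinates forced to be equal on a set. -/
def relS {n : ℕ} (X : Set (V n)) : Setoid (Fin n) where
  r i j := ∀ x ∈ X, x i = x j
  iseqv := ⟨fun _ _ _ => rfl, fun h x hx => (h x hx).symm,
    fun h h' x hx => (h x hx).trans (h' x hx)⟩

/-- The subspace of vectors constant on classes. -/
def spaceMap {n : ℕ} (s : Setoid (Fin n)) : (Quotient s → ℝ) →ₗ[ℝ] V n where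
  toFun g := WithLp.toLp 2 (fun i => g (Quotient.mk s i))
  map_add' _ _ := by ext; simp
  map_smul' _ _ := by ext; simp

lemma mem_range_spaceMap {n : ℕ} (s : Setoid (Fin n)) (x : V n) :
    x ∈ LinearMap.range (spaceMap s) ↔ ∀ i j, s i j → x i = x j := by
  constructor
  · rintro ⟨g, rfl⟩ i j h
    have : Quotient.mk s i = Quotient.mk s j := Quotient.sound h
    simp [spaceMap, this]
  · intro h
    refine ⟨Quotient.lift (fun i => x i) h, ?_⟩
    ext i
    simp [spaceMap]

lemma spaceMap_inj {n : ℕ} (s : Setoid (Fin n)) : Function.Injective (spaceMap s) := by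
  intro g g' h
  funext a
  induction a using Quotient.inductionOn with
  | h i =>
    have := congrArg (fun x : V n => x i) h
    simpa [spaceMap] using this

open Classical in
lemma dimS_range {n : ℕ} (s : Setoid (Fin n)) :
    dimS (LinearMap.range (spaceMap s) : Set (V n)) = Fintype.card (Quotient s) := by
  have h : vectorSpan ℝ (LinearMap.range (spaceMap s) : Set (V n))
      = LinearMap.range (spaceMap s) :=
    Submodule.toAffineSubspace_direction (LinearMap.range (spaceMap s))
  rw [dimS, h, LinearMap.finrank_range_of_inj (spaceMap_inj s)]
  simp

lemma relS_range {n : ℕ} (s : Setoid (Fin n)) :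
    relS (LinearMap.range (spaceMap s) : Set (V n)) = s := by
  classical
  ext i j
  constructor
  · intro h
    have := h (spaceMap s (fun a => if a = Quotient.mk s i then 1 else 0)) ⟨_, rfl⟩
    by_contra hc
    have hne : Quotient.mk s j ≠ Quotient.mk s i := fun e => hc (Setoid.symm (Quotient.exact e))
    simp [spaceMap, hne] at this
  · intro h x hx
    exact (mem_range_spaceMap s x).1 hx i j h

lemma mem_braid_hyp {n : ℕ} (i j : Fin n) (x : V n) : x ∈ hypSet (diffForm n i j) ↔ x i = x j := by
  show x i - x j = 0 ↔ _
  exact sub_eq_zero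

lemma flat_eq_range {n : ℕ} (X : Flat (braid n)) :
    X.1 = (LinearMap.range (spaceMap (relS X.1)) : Set (V n)) := by
  ext x
  rw [SetLike.mem_coe, mem_range_spaceMap]
  constructor
  · intro hx i j h
    exact h x hx
  · intro h
    rw [flat_eq_inter]
    simp only [Set.mem_iInter, Set.mem_setOf_eq]
    rintro ⟨l, hl⟩ hX
    simp only [braid, Finset.mem_image, Finset.mem_filter] at hl
    obtain ⟨p, -, rfl⟩ := hl
    exact (mem_braid_hyp _ _ _).2 (h _ _ fun y hy => (mem_braid_hyp _ _ _).1 (hX hy))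

lemma diffForm_mem {n : ℕ} {i j : Fin n} (h : i < j) : diffForm n i j ∈ braid n := by
  simp only [braid, Finset.mem_image, Finset.mem_filter]
  exact ⟨(i, j), ⟨Finset.mem_univ _, h⟩, rfl⟩

/-- The flat of a set partition. -/
def flatOf {n : ℕ} (s : Setoid (Fin n)) : Flat (braid n) :=
  ⟨LinearMap.range (spaceMap s), ⟨0, Submodule.zero_mem _⟩,
    fun l => (LinearMap.range (spaceMap s) : Set (V n)) ⊆ hypSet l.1, by
      apply subset_antisymm
      · intro x hx
        simp only [Set.mem_iInter, Set.mem_setOf_eq]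
        intro l hl
        exact hl hx
      · intro x hx
        simp only [Set.mem_iInter, Set.mem_setOf_eq] at hx
        rw [SetLike.mem_coe, mem_range_spaceMap]
        have key : ∀ i j, i < j → s i j → x i = x j := by
          intro i j hij h
          refine (mem_braid_hyp _ _ _).1 (hx ⟨_, diffForm_mem hij⟩ ?_)
          intro y hy
          exact (mem_braid_hyp _ _ _).2 ((mem_range_spaceMap s y).1 hy i j h)
        intro i j h
        rcases lt_trichotomy i j with hl | rfl | hl
        · exact key i j hl h
        · rfl
        · exact (key j i hl (Setoid.symm h)).symm⟩

lemma flatOf_le_iff {n : ℕ} (s : Setoid (Fin n)) (X : Flat (braid n)) :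
    flatOf s ≤ X ↔ relS X.1 ≤ s := by
  constructor
  · intro h
    have : relS X.1 ≤ relS (flatOf s).1 := fun {i j} hij x hx => hij x (h hx)
    rwa [show relS (flatOf s).1 = s from relS_range s] at this
  · intro h
    show (LinearMap.range (spaceMap s) : Set (V n)) ⊆ X.1
    rw [flat_eq_range X]
    intro x hx
    rw [SetLike.mem_coe, mem_range_spaceMap] at hx ⊢
    exact fun i j hij => hx i j (h hij)

lemma flatOf_eq_top {n : ℕ} (s : Setoid (Fin n)) :
    flatOf s = topFlat (braid n) ↔ s = ⊥ := by
  constructor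
  · intro h
    have h1 : relS (flatOf s).1 = s := relS_range s
    have h2 : relS (flatOf (⊥ : Setoid (Fin n))).1 = ⊥ := relS_range ⊥
    have h3 : flatOf (⊥ : Setoid (Fin n)) = topFlat (braid n) := by
      apply Subtype.ext
      apply Set.eq_univ_of_forall
      intro x
      refine (mem_range_spaceMap _ x).2 ?_
      rintro i j hij
      have : i = j := hij
      rw [this]
    rw [← h1, h, ← h3, h2]
  · rintro rfl
    apply Subtype.ext
    apply Set.eq_univ_of_forall
    intro x
    refine (mem_range_spaceMap _ x).2 ?_
    rintro i j hij
    have : i = j := hij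
    rw [this]

open Classical in
lemma card_le {n : ℕ} (q : ℕ) (X : Flat (braid n)) :
    (∑ f : Fin n → Fin q, if flatOf (Setoid.ker f) ≤ X then (1 : ℝ) else 0)
      = (q : ℝ) ^ dimS X.1 := by
  have hd : dimS X.1 = Fintype.card (Quotient (relS X.1)) := by
    conv_lhs => rw [flat_eq_range X]
    exact dimS_range _
  rw [Finset.sum_boole, hd]
  simp only [flatOf_le_iff]
  rw [← Fintype.card_subtype, Fintype.card_congr (Setoid.liftEquiv (relS X.1))]
  simp

open Classical in
lemma moebius_right {n : ℕ} {𝒜 : Finset (AffForm n)} {μ : Flat 𝒜 → Flat 𝒜 → ℝ}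
    (hμ : IsMoebius 𝒜 μ) (X Y : Flat 𝒜) :
    (∑ Z, (if X ≤ Z then (1 : ℝ) else 0) * μ Z Y) = if X = Y then 1 else 0 := by
  obtain ⟨h1, h2, h3⟩ := hμ
  let M : Matrix (Flat 𝒜) (Flat 𝒜) ℝ := Matrix.of μ
  let Z : Matrix (Flat 𝒜) (Flat 𝒜) ℝ := Matrix.of fun X Y => if X ≤ Y then 1 else 0
  have hMZ : M * Z = 1 := by
    ext A B
    rw [Matrix.mul_apply, Matrix.one_apply]
    have e : ∀ C, M A C * Z C B = if A ≤ C ∧ C ≤ B then μ A C else 0 := by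
      intro C
      by_cases hA : A ≤ C
      · simp [M, Z, hA]
      · simp [M, Z, hA, h3 A C hA]
    simp only [e]
    by_cases hAB : A = B
    · subst hAB
      rw [if_pos rfl, Finset.sum_eq_single A]
      · simp [h1]
      · intro C _ hC
        rw [if_neg]
        rintro ⟨a, b⟩
        exact hC (le_antisymm b a)
      · simp
    · rw [if_neg hAB]
      by_cases hle : A ≤ B
      · exact h2 A B (lt_of_le_of_ne hle hAB)
      · apply Finset.sum_eq_zero
        intro C _
        rw [if_neg]
        rintro ⟨a, b⟩
        exact hle (a.trans b)
  have hZM : Z * M = 1 := mul_eq_one_comm.1 hMZ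
  have := congrFun (congrFun hZM X) Y
  rw [Matrix.mul_apply, Matrix.one_apply] at this
  simpa [M, Z] using this

open Classical in
lemma count_inj (n q : ℕ) :
    (∑ f : Fin n → Fin q, if Setoid.ker f = ⊥ then (1 : ℝ) else 0)
      = ∏ i ∈ Finset.range n, ((q : ℝ) - i) := by
  rw [Finset.sum_boole]
  have h : ∀ f : Fin n → Fin q, Setoid.ker f = ⊥ ↔ Function.Injective f := by
    intro f
    exact (Setoid.injective_iff_ker_bot f).symm
  simp only [h]
  rw [← Fintype.card_subtype,
    Fintype.card_congr (Equiv.subtypeInjectiveEquivEmbedding (Fin n) (Fin q)),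
    Fintype.card_embedding_eq]
  simp only [Fintype.card_fin]
  rw [← descPochhammer_eval_eq_descFactorial ℝ q n, descPochhammer_eval_eq_prod_range]

lemma eval_nat {n : ℕ} (μ : Flat (braid n) → Flat (braid n) → ℝ)
    (hμ : IsMoebius (braid n) μ) (q : ℕ) :
    (∑ Y, μ Y (topFlat (braid n)) * (q : ℝ) ^ dimS Y.1)
      = ∏ i ∈ Finset.range n, ((q : ℝ) - i) := by
  classical
  rw [← count_inj]
  simp only [← card_le, Finset.mul_sum]
  rw [Finset.sum_comm]
  refine Finset.sum_congr rfl fun f _ => ?_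
  simp only [mul_comm (μ _ _)]
  rw [moebius_right hμ]
  simp only [flatOf_eq_top]

lemma dimS_pos {n : ℕ} (hn : 1 ≤ n) (X : Flat (braid n)) : 1 ≤ dimS X.1 := by
  classical
  rw [flat_eq_range X, dimS_range]
  exact Fintype.card_pos_iff.2 ⟨Quotient.mk _ ⟨0, hn⟩⟩

/-- The characteristic polynomial of the braid arrangement:
`χ(𝒜_n, t) = (t-1)(t-2)⋯(t-(n-1))`  (here `d = 1`). -/
theorem braid_charPoly (n : ℕ) (hn : 1 ≤ n)
    (μ : Flat (braid n) → Flat (braid n) → ℝ) (hμ : IsMoebius (braid n) μ) (t : ℝ) :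
    charPolyUnder (braid n) μ 1 (topFlat (braid n)) t
      = ∏ i ∈ Finset.range (n - 1), (t - (i + 1)) := by
  classical
  have htop : ∀ Y : Flat (braid n), Y ≤ topFlat (braid n) := fun Y => Set.subset_univ _
  let P : Polynomial ℝ := ∑ Y : Flat (braid n),
    Polynomial.C (μ Y (topFlat (braid n))) * Polynomial.X ^ (dimS Y.1 - 1)
  let Q : Polynomial ℝ := ∏ i ∈ Finset.range (n - 1),
    (Polynomial.X - Polynomial.C ((i : ℝ) + 1))
  have hP : ∀ s : ℝ, P.eval s = ∑ Y : Flat (braid n),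
      μ Y (topFlat (braid n)) * s ^ (dimS Y.1 - 1) := by
    intro s
    simp [P, Polynomial.eval_finset_sum]
  have hQ : ∀ s : ℝ, Q.eval s = ∏ i ∈ Finset.range (n - 1), (s - (i + 1)) := by
    intro s
    simp [Q, Polynomial.eval_prod]
  have hPQ : P = Q := by
    apply Polynomial.eq_of_infinite_eval_eq
    refine Set.Infinite.mono ?_ (Set.infinite_range_of_injective
      (f := fun m : ℕ => ((m + 1 : ℕ) : ℝ)) ?_)
    · rintro _ ⟨m, rfl⟩
      show P.eval _ = Q.eval _
      have hne : ((m + 1 : ℕ) : ℝ) ≠ 0 := by positivity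
      apply mul_left_cancel₀ hne
      rw [hP, hQ]
      have h := eval_nat μ hμ (m + 1)
      obtain ⟨k, rfl⟩ : ∃ k, n = k + 1 := ⟨n - 1, by omega⟩
      rw [Finset.prod_range_succ'] at h
      simp only [Nat.add_sub_cancel]
      have h' : ∀ Y : Flat (braid (k + 1)), ((m + 1 : ℕ) : ℝ) ^ dimS Y.1
          = ((m + 1 : ℕ) : ℝ) * ((m + 1 : ℕ) : ℝ) ^ (dimS Y.1 - 1) := by
        intro Y
        rw [← pow_succ', Nat.sub_add_cancel (dimS_pos hn Y)]
      simp only [h'] at h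
      rw [Finset.mul_sum]
      simp only [mul_left_comm ((m + 1 : ℕ) : ℝ)]
      rw [h, mul_comm]
      push_cast
      ring
    · intro a b h
      simpa using h
  simp only [charPolyUnder, htop, if_true]
  rw [← hP, hPQ, hQ]

end CharElts
end
end
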